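/- Let n > 1 be an integer and let q be a real number with 0 < q < 1. Then P_q(n) := ∏_{1 ≤ k ≤ n, gcd(k,n)=1} Γ_q(k/n) = (Γ_q(1/2))^{φ(n)} · ((q^{1/2}; q)_∞)^{φ(n)} / ∏_{d | n} ((q^{1/d}; q^{1/d})_∞)^{μ(n/d)}, where φ is Euler's totient function and μ is the Möbius function. -/

import Mathlib

/-- Infinite q-Pochhammer symbol `(a; q)_∞ = ∏_{i=0}^∞ (1 - a qⁱ)` (real version). -/
noncomputable def qPochR (a q : ℝ) : ℝ := ∏' i : ℕ, (1 - a * q ^ i)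

/-- The q-gamma function `Γ_q(z) = ((q;q)_∞ / (q^z;q)_∞) (1-q)^{1-z}` for `0 < q < 1`. -/
noncomputable def qGamma (q z : ℝ) : ℝ :=
  qPochR q q / qPochR (q ^ z) q * (1 - q) ^ (1 - z)

/-!
Since `Γ_q(z) (q ^ z; q)_∞ = (q; q)_∞ (1 - q) ^ (1 - z)`, the product of the values `Γ_q(z)` over a
finite family of `z` depends, apart from the factor `∏ (q ^ z; q)_∞`, only on the size and the sum
of the family. The `φ(n)` fractions `k / n` in lowest terms are symmetric about `1 / 2` when
`n ≠ 1`, so they behave here like `φ(n)` copies of `1 / 2`. To evaluate `∏ (q ^ (k / n); q)_∞` over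
these fractions, take first all `k` from `1` to `n`: with `x = q ^ (1 / n)` the product is
`∏ (x ^ k; x ^ n)_∞ = (x; x)_∞`, one factor for each residue class of exponents modulo `n`. Sorting
the fractions by reduced denominator and applying Möbius inversion isolates those in lowest terms.
-/

section ReducedFractions

open Finset

theorem mem_filter_Icc_gcd_eq_one_iff_lt {n : ℕ} (hn : n ≠ 1) {k : ℕ} :
    k ∈ (Icc 1 n).filter (fun k => Nat.gcd k n = 1) ↔ k < n ∧ Nat.gcd k n = 1 := by
  rw [mem_filter, mem_Icc]
  refine and_congr_left fun hk => ⟨fun h => h.2.lt_of_ne ?_, fun h => ⟨?_, h.le⟩⟩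
  · rintro rfl
    exact hn (by simpa using hk)
  · refine Nat.one_le_iff_ne_zero.2 ?_
    rintro rfl
    exact hn (by simpa using hk)

theorem card_filter_Icc_gcd_eq_one (n : ℕ) :
    #((Icc 1 n).filter (fun k => Nat.gcd k n = 1)) = n.totient := by
  rw [← Nat.filter_coprime_Ico_eq_totient n 1, add_comm 1 n, Ico_add_one_right_eq_Icc]
  simp only [Nat.coprime_comm, Nat.Coprime]

theorem sum_coprime_reflect {M : Type*} [AddCommMonoid M] (f : ℕ → M) {n : ℕ} (hn : n ≠ 1) :
    ∑ k ∈ (Icc 1 n).filter (fun k => Nat.gcd k n = 1), f (n - k) =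
      ∑ k ∈ (Icc 1 n).filter (fun k => Nat.gcd k n = 1), f k := by
  have sub_mem : ∀ k ∈ (Icc 1 n).filter (fun k => Nat.gcd k n = 1),
      n - k ∈ (Icc 1 n).filter (fun k => Nat.gcd k n = 1) := by
    intro k hk
    obtain ⟨hkn, hgcd⟩ := (mem_filter_Icc_gcd_eq_one_iff_lt hn).1 hk
    have hk_pos : 1 ≤ k := (mem_Icc.1 (mem_filter.1 hk).1).1
    exact (mem_filter_Icc_gcd_eq_one_iff_lt hn).2
      ⟨by lia, by rw [Nat.gcd_self_sub_left hkn.le, hgcd]⟩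
  have sub_sub_self : ∀ k ∈ (Icc 1 n).filter (fun k => Nat.gcd k n = 1), n - (n - k) = k :=
    fun k hk => Nat.sub_sub_self (mem_Icc.1 (mem_filter.1 hk).1).2
  exact sum_nbij' (n - ·) (n - ·) sub_mem sub_mem sub_sub_self sub_sub_self fun _ _ => rfl

theorem sum_coprime_div {K : Type*} [Field K] [CharZero K] {n : ℕ} (hn : n ≠ 1) :
    ∑ k ∈ (Icc 1 n).filter (fun k => Nat.gcd k n = 1), (k : K) / n = n.totient / 2 := by
  have pair_eq_one : ∀ k ∈ (Icc 1 n).filter (fun k => Nat.gcd k n = 1),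
      ((n - k : ℕ) : K) / n + k / n = 1 := by
    intro k hk
    obtain ⟨hk_pos, hkn⟩ := mem_Icc.1 (mem_filter.1 hk).1
    rw [← add_div, ← Nat.cast_add, Nat.sub_add_cancel hkn, div_self]
    exact Nat.cast_ne_zero.2 (by lia)
  have hdouble := sum_congr rfl pair_eq_one
  rw [sum_add_distrib, sum_coprime_reflect (fun k => (k : K) / n) hn, sum_const,
    card_filter_Icc_gcd_eq_one, nsmul_one] at hdouble
  rw [← hdouble, add_self_div_two]

theorem prod_filter_gcd_eq {M : Type*} [CommMonoid M] (f : ℕ → M) {d e : ℕ} (hd : 0 < d) :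
    ∏ k ∈ (Icc 1 (d * e)).filter (fun k => Nat.gcd k (d * e) = d), f k =
      ∏ j ∈ (Icc 1 e).filter (fun j => Nat.gcd j e = 1), f (d * j) := by
  have mul_mem_iff (j : ℕ) : d * j ∈ (Icc 1 (d * e)).filter (fun k => Nat.gcd k (d * e) = d) ↔
      j ∈ (Icc 1 e).filter (fun j => Nat.gcd j e = 1) := by
    simp [Nat.gcd_mul_left, hd, hd.ne', Nat.succ_le_iff]
  have hdvd : ∀ k ∈ (Icc 1 (d * e)).filter (fun k => Nat.gcd k (d * e) = d), d * (k / d) = k :=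
    fun k hk => Nat.mul_div_cancel' ((mem_filter.1 hk).2 ▸ Nat.gcd_dvd_left k (d * e))
  refine (prod_nbij' (d * ·) (· / d) (fun j hj => (mul_mem_iff j).2 hj) (fun k hk => ?_)
    (fun j _ => Nat.mul_div_cancel_left j hd) hdvd fun _ _ => rfl).symm
  rwa [← mul_mem_iff, hdvd k hk]

theorem prod_divisors_prod_coprime_div {K M : Type*} [Semifield K] [CharZero K] [CommMonoid M]
    (f : K → M) {n : ℕ} (hn : n ≠ 0) :
    ∏ d ∈ n.divisors, ∏ k ∈ (Icc 1 d).filter (fun k => Nat.gcd k d = 1), f ((k : K) / d) =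
      ∏ k ∈ Icc 1 n, f ((k : K) / n) := by
  rw [← prod_fiberwise_of_maps_to (s := Icc 1 n) (t := n.divisors) (g := fun k => Nat.gcd k n)
    fun k _ => Nat.mem_divisors.2 ⟨Nat.gcd_dvd_right k n, hn⟩, ← Nat.prod_div_divisors]
  refine prod_congr rfl fun d hd => ?_
  obtain ⟨e, rfl⟩ := Nat.dvd_of_mem_divisors hd
  have hd_pos : 0 < d := Nat.pos_of_mem_divisors hd
  rw [Nat.mul_div_cancel_left e hd_pos, prod_filter_gcd_eq _ hd_pos]
  refine prod_congr rfl fun k _ => ?_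
  rw [Nat.cast_mul, Nat.cast_mul, mul_div_mul_left _ _ (Nat.cast_ne_zero.2 hd_pos.ne')]

theorem prod_coprime_div_eq_prod_pow_moebius {K G : Type*} [Semifield K] [CharZero K]
    [CommGroupWithZero G] {f : K → G} {g : ℕ → G}
    (hf : ∀ n k : ℕ, 0 < n → 0 < k → f ((k : K) / n) ≠ 0)
    (hfg : ∀ n : ℕ, 0 < n → ∏ k ∈ Icc 1 n, f ((k : K) / n) = g n) {n : ℕ} (hn : 0 < n) :
    ∏ k ∈ (Icc 1 n).filter (fun k => Nat.gcd k n = 1), f ((k : K) / n) =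
      ∏ d ∈ n.divisors, g d ^ ArithmeticFunction.moebius (n / d) := by
  have hprod (m : ℕ) (hm : 0 < m) (s : Finset ℕ) (hs : s ⊆ Icc 1 m) :
      ∏ k ∈ s, f ((k : K) / m) ≠ 0 :=
    prod_ne_zero_iff.2 fun k hk => hf m k hm (mem_Icc.1 (hs hk)).1
  have hinv := (ArithmeticFunction.prod_eq_iff_prod_pow_moebius_eq_of_nonzero
    (fun m hm => hprod m hm _ (filter_subset (fun k => Nat.gcd k m = 1) _))
    (fun m hm => hfg m hm ▸ hprod m hm _ Subset.rfl)).1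
    fun m hm => (prod_divisors_prod_coprime_div f hm.ne').trans (hfg m hm)
  rw [← hinv n hn, Nat.prod_divisorsAntidiagonal' fun i d => g d ^ ArithmeticFunction.moebius i]

end ReducedFractions

theorem prod_range_tprod_mul_add {M : Type*} [CommMonoid M] [TopologicalSpace M]
    [ContinuousMul M] [T3Space M] {f : ℕ → M} {m : ℕ} (hm : m ≠ 0) (hf : Multipliable f)
    (hf_class : ∀ j < m, Multipliable fun i => f (m * i + j)) :
    ∏ j ∈ Finset.range m, ∏' i, f (m * i + j) = ∏' i, f i := by
  have : NeZero m := ⟨hm⟩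
  let e : Fin m × ℕ ≃ ℕ := (Equiv.prodComm _ _).trans (Nat.divModEquiv m).symm
  have he (j : Fin m) (i : ℕ) : f (e (j, i)) = f (m * i + j) := by
    simp [e, Nat.divModEquiv, mul_comm m]
  calc ∏ j ∈ Finset.range m, ∏' i, f (m * i + j)
      = ∏ j : Fin m, ∏' i, f (e (j, i)) := by
        simp only [he, Fin.prod_univ_eq_prod_range fun j => ∏' i, f (m * i + j)]
    _ = ∏' p, f (e p) := by
        have hrow (j : Fin m) : Multipliable fun i => f (e (j, i)) := by
          simpa only [he] using hf_class j j.is_lt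
        rw [Multipliable.tprod_prod' (f := fun p => f (e p)) (e.multipliable_iff.2 hf) hrow,
          tprod_fintype]
    _ = ∏' i, f i := e.tprod_eq f

section QPochhammer

variable {q : ℝ}

theorem summable_norm_neg_mul_pow (a : ℝ) (hq : |q| < 1) :
    Summable fun i : ℕ => ‖-(a * q ^ i)‖ := by
  simpa only [norm_neg] using ((summable_geometric_of_abs_lt_one hq).mul_left a).norm

theorem multipliable_one_sub_mul_pow (a : ℝ) (hq : |q| < 1) :
    Multipliable fun i : ℕ => 1 - a * q ^ i := by
  simpa only [sub_eq_add_neg] using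
    multipliable_one_add_of_summable (summable_norm_neg_mul_pow a hq)

theorem qPochR_ne_zero {a : ℝ} (hq : |q| < 1) (ha : ∀ i : ℕ, a * q ^ i ≠ 1) :
    qPochR a q ≠ 0 := by
  simpa only [qPochR, sub_eq_add_neg] using tprod_one_add_ne_zero_of_summable
    (fun i => by simpa only [← sub_eq_add_neg] using sub_ne_zero.2 (ha i).symm)
    (summable_norm_neg_mul_pow a hq)

theorem qPochR_rpow_ne_zero {z : ℝ} (hq0 : 0 < q) (hq1 : q < 1) (hz : 0 < z) :
    qPochR (q ^ z) q ≠ 0 := by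
  refine qPochR_ne_zero (abs_lt.2 ⟨by linarith, hq1⟩) fun i => ?_
  rw [← Real.rpow_add_natCast hq0.ne']
  exact (Real.rpow_lt_one hq0.le hq1 (by positivity)).ne

theorem prod_range_qPochR_mul_pow (a : ℝ) (hq : |q| < 1) {m : ℕ} (hm : m ≠ 0) :
    ∏ j ∈ Finset.range m, qPochR (a * q ^ j) (q ^ m) = qPochR a q := by
  have hqm : |q ^ m| < 1 := by simpa only [abs_pow] using pow_lt_one₀ (abs_nonneg q) hq hm
  have hterm (i j : ℕ) : 1 - a * q ^ j * (q ^ m) ^ i = 1 - a * q ^ (m * i + j) := by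
    rw [pow_add, pow_mul]
    ring
  simp only [qPochR, hterm]
  refine prod_range_tprod_mul_add hm (multipliable_one_sub_mul_pow a hq) fun j _ => ?_
  simpa only [hterm] using multipliable_one_sub_mul_pow (a * q ^ j) hqm

theorem prod_Icc_qPochR_pow (hq : |q| < 1) {m : ℕ} (hm : m ≠ 0) :
    ∏ k ∈ Finset.Icc 1 m, qPochR (q ^ k) (q ^ m) = qPochR q q := by
  rw [← prod_range_qPochR_mul_pow q hq hm, ← Finset.Ico_add_one_right_eq_Icc,
    Finset.prod_Ico_eq_prod_range, Nat.add_sub_cancel]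
  simp only [pow_add, pow_one]

theorem prod_Icc_qPochR_rpow_div (hq0 : 0 < q) (hq1 : q < 1) {m : ℕ} (hm : 0 < m) :
    ∏ k ∈ Finset.Icc 1 m, qPochR (q ^ ((k : ℝ) / m)) q =
      qPochR (q ^ ((1 : ℝ) / m)) (q ^ ((1 : ℝ) / m)) := by
  have hroot_pow (k : ℕ) : (q ^ ((1 : ℝ) / m)) ^ k = q ^ ((k : ℝ) / m) := by
    rw [← Real.rpow_mul_natCast hq0.le, one_div_mul_eq_div]
  have hroot_lt : |q ^ ((1 : ℝ) / m)| < 1 := by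
    rw [abs_of_pos (Real.rpow_pos_of_pos hq0 _)]
    exact Real.rpow_lt_one hq0.le hq1 (by positivity)
  have hm0 : (m : ℝ) ≠ 0 := Nat.cast_ne_zero.2 hm.ne'
  simpa only [hroot_pow, div_self hm0, Real.rpow_one] using prod_Icc_qPochR_pow hroot_lt hm.ne'

theorem prod_coprime_qPochR (hq0 : 0 < q) (hq1 : q < 1) {n : ℕ} (hn : 0 < n) :
    ∏ k ∈ (Finset.Icc 1 n).filter (fun k => Nat.gcd k n = 1), qPochR (q ^ ((k : ℝ) / n)) q =
      ∏ d ∈ n.divisors, (qPochR (q ^ ((1 : ℝ) / d)) (q ^ ((1 : ℝ) / d))) ^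
        (ArithmeticFunction.moebius (n / d)) :=
  prod_coprime_div_eq_prod_pow_moebius (f := fun z : ℝ => qPochR (q ^ z) q)
    (fun _ _ _ _ => qPochR_rpow_ne_zero hq0 hq1 (by positivity))
    (fun _ hm => prod_Icc_qPochR_rpow_div hq0 hq1 hm) hn

theorem qGamma_mul_qPochR {z : ℝ} (hq0 : 0 < q) (hq1 : q < 1) (hz : 0 < z) :
    qGamma q z * qPochR (q ^ z) q = qPochR q q * (1 - q) ^ (1 - z) := by
  rw [qGamma, mul_right_comm, div_mul_cancel₀ _ (qPochR_rpow_ne_zero hq0 hq1 hz)]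

theorem prod_qGamma {ι : Type*} (s : Finset ι) (z : ι → ℝ) (hq1 : q < 1) :
    ∏ i ∈ s, qGamma q (z i) =
      qPochR q q ^ s.card * (1 - q) ^ (s.card - ∑ i ∈ s, z i) / ∏ i ∈ s, qPochR (q ^ z i) q := by
  simp only [qGamma, Finset.prod_mul_distrib, Finset.prod_div_distrib, Finset.prod_const,
    ← Real.rpow_sum_of_pos (sub_pos.2 hq1), Finset.sum_sub_distrib, Finset.sum_const, nsmul_one,
    div_mul_eq_mul_div]

end QPochhammer

theorem q_short_product (n : ℕ) (hn : 1 < n) (q : ℝ) (hq0 : 0 < q) (hq1 : q < 1) :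
    ∏ k ∈ (Finset.Icc 1 n).filter (fun k => Nat.gcd k n = 1), qGamma q ((k : ℝ) / n) =
      (qGamma q (1 / 2)) ^ n.totient * (qPochR (q ^ ((1 : ℝ) / 2)) q) ^ n.totient /
        ∏ d ∈ n.divisors,
          (qPochR (q ^ ((1 : ℝ) / d)) (q ^ ((1 : ℝ) / d))) ^
            (ArithmeticFunction.moebius (n / d)) := by
  have hexponent : (n.totient : ℝ) - n.totient / 2 = (1 - 1 / 2) * n.totient := by ring
  rw [prod_qGamma _ _ hq1, card_filter_Icc_gcd_eq_one, sum_coprime_div hn.ne',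
    prod_coprime_qPochR hq0 hq1 (by positivity), ← mul_pow,
    qGamma_mul_qPochR hq0 hq1 one_half_pos, mul_pow, hexponent,
    Real.rpow_mul_natCast (sub_pos.2 hq1).le]
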